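/- arXiv:2212.13848 — 6 statements merged into one kernel-verified Lean document; each statement's English description precedes it below -/
import Mathlib

section
/- Let (x_i, y_i)_{i=1}^n with each ‖x_i‖₂ = 1, let L̂(θ) = (1/n)·Σ_{i=1}^n (f_θ(x_i) − y_i)², and let g(θ) = (2/n)·Σ_{i=1}^n (f_θ(x_i) − y_i)·φ_θ(x_i) ∈ ℝ^{dm} be the subgradient of L̂ at θ. If every output weight satisfies u_k² = 1/m, then ‖g(θ)‖² ≤ 4·L̂(θ). -/
open Finset RealInnerProductSpace

/-! By Cauchy–Schwarz over the samples, `‖g(θ)‖²` is at most `4 · L̂(θ)` times the sample mean of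
`‖φ_θ(x_i)‖²`, and `‖φ_θ(z)‖² ≤ ‖u‖² ‖z‖²` because each gate is `0` or `1`. -/

section General

variable {ι : Type*}

theorem norm_sum_smul_sq_le {E : Type*} [SeminormedAddCommGroup E] [NormedSpace ℝ E]
    (s : Finset ι) (c : ι → ℝ) (v : ι → E) :
    ‖∑ i ∈ s, c i • v i‖ ^ 2 ≤ (∑ i ∈ s, c i ^ 2) * ∑ i ∈ s, ‖v i‖ ^ 2 := by
  have triangle : ‖∑ i ∈ s, c i • v i‖ ≤ ∑ i ∈ s, |c i| * ‖v i‖ := by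
    simpa only [norm_smul, Real.norm_eq_abs] using norm_sum_le s fun i ↦ c i • v i
  calc ‖∑ i ∈ s, c i • v i‖ ^ 2
      ≤ (∑ i ∈ s, |c i| * ‖v i‖) ^ 2 := by gcongr
    _ ≤ (∑ i ∈ s, |c i| ^ 2) * ∑ i ∈ s, ‖v i‖ ^ 2 := sum_mul_sq_le_sq_mul_sq s _ _
    _ = (∑ i ∈ s, c i ^ 2) * ∑ i ∈ s, ‖v i‖ ^ 2 := by simp only [sq_abs]

theorem sum_le_one_of_le_one_div_card {K : Type*} [Field K] [LinearOrder K]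
    [IsStrictOrderedRing K] [Fintype ι] {f : ι → K} (hf : ∀ i, f i ≤ 1 / Fintype.card ι) :
    ∑ i, f i ≤ 1 :=
  calc ∑ i, f i
      ≤ Fintype.card ι • (1 / Fintype.card ι : K) := sum_le_card_nsmul _ _ _ fun i _ ↦ hf i
    _ = Fintype.card ι / Fintype.card ι := by rw [nsmul_eq_mul, mul_one_div]
    _ ≤ 1 := div_self_le_one _

end General

section ReLU

variable {E ι κ : Type*} [SeminormedAddCommGroup E] [InnerProductSpace ℝ E] [Fintype ι] [Fintype κ]

/-- The prediction `f_θ(z)` of the shallow ReLU network with hidden weights `θ = w` and output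
weights `u`, its neurons being indexed by `κ`. -/
noncomputable def reluNetwork (u : κ → ℝ) (w : κ → E) (z : E) : ℝ :=
  ∑ k, u k * max ⟪w k, z⟫ 0

/-- The subgradient feature map `φ_θ(z)`, as a family of blocks in `E`, one for each neuron. A
neuron with `⟪w k, z⟫ = 0` counts as inactive. -/
noncomputable def reluFeature (u : κ → ℝ) (w : κ → E) (z : E) (k : κ) : E :=
  (u k * if 0 < ⟪w k, z⟫ then 1 else 0) • z

/-- The empirical risk `L̂(θ)`: the mean squared error of the network on the sample `(x, y)`, which
is indexed by `ι`. -/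
noncomputable def empiricalRisk (u : κ → ℝ) (w : κ → E) (x : ι → E) (y : ι → ℝ) : ℝ :=
  1 / Fintype.card ι * ∑ i, (reluNetwork u w (x i) - y i) ^ 2

/-- The subgradient `g(θ)` of the empirical risk, as a family of blocks in `E`, one for each
neuron. -/
noncomputable def riskSubgradient (u : κ → ℝ) (w : κ → E) (x : ι → E) (y : ι → ℝ) (k : κ) : E :=
  (2 / Fintype.card ι : ℝ) •
    ∑ i, (reluNetwork u w (x i) - y i) • reluFeature u w (x i) k

theorem empiricalRisk_nonneg (u : κ → ℝ) (w : κ → E) (x : ι → E) (y : ι → ℝ) :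
    0 ≤ empiricalRisk u w x y := by
  unfold empiricalRisk
  positivity

theorem sum_norm_reluFeature_sq_le (u : κ → ℝ) (w : κ → E) (z : E) :
    ∑ k, ‖reluFeature u w z k‖ ^ 2 ≤ (∑ k, u k ^ 2) * ‖z‖ ^ 2 := by
  have gated_weight_sq_le (k : κ) : (u k * if 0 < ⟪w k, z⟫ then 1 else 0) ^ 2 ≤ u k ^ 2 := by
    split_ifs <;> simp [sq_nonneg]
  simp only [reluFeature, norm_smul, mul_pow _ ‖z‖, Real.norm_eq_abs, sq_abs, sum_mul]
  exact sum_le_sum fun k _ ↦ mul_le_mul_of_nonneg_right (gated_weight_sq_le k) (sq_nonneg _)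

theorem sum_norm_riskSubgradient_sq_le_mul_mean_reluFeature
    (u : κ → ℝ) (w : κ → E) (x : ι → E) (y : ι → ℝ) :
    ∑ k, ‖riskSubgradient u w x y k‖ ^ 2 ≤
      4 * empiricalRisk u w x y *
        (1 / Fintype.card ι * ∑ i, ∑ k, ‖reluFeature u w (x i) k‖ ^ 2) := by
  let n : ℝ := Fintype.card ι
  let r (i : ι) : ℝ := reluNetwork u w (x i) - y i
  calc ∑ k, ‖riskSubgradient u w x y k‖ ^ 2
      = ∑ k, (2 / n) ^ 2 * ‖∑ i, r i • reluFeature u w (x i) k‖ ^ 2 := by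
        simp only [riskSubgradient, norm_smul, mul_pow, Real.norm_eq_abs, sq_abs, n, r]
    _ ≤ ∑ k, (2 / n) ^ 2 * ((∑ i, r i ^ 2) * ∑ i, ‖reluFeature u w (x i) k‖ ^ 2) := by
        gcongr with k
        exact norm_sum_smul_sq_le _ _ _
    _ = (2 / n) ^ 2 * ((∑ i, r i ^ 2) * ∑ i, ∑ k, ‖reluFeature u w (x i) k‖ ^ 2) := by
        rw [← mul_sum, ← mul_sum, sum_comm]
    _ = 4 * empiricalRisk u w x y * (1 / n * ∑ i, ∑ k, ‖reluFeature u w (x i) k‖ ^ 2) := by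
        simp only [empiricalRisk, n, r]
        ring

theorem empirical_risk_subgradient_norm_sq_le_general
    (w : κ → E) {u : κ → ℝ} (hu : ∑ k, u k ^ 2 ≤ 1) {x : ι → E} (hx : ∀ i, ‖x i‖ ≤ 1)
    (y : ι → ℝ) :
    ∑ k, ‖riskSubgradient u w x y k‖ ^ 2 ≤ 4 * empiricalRisk u w x y := by
  have feature_le_one (i : ι) : ∑ k, ‖reluFeature u w (x i) k‖ ^ 2 ≤ 1 :=
    (sum_norm_reluFeature_sq_le u w (x i)).trans <|
      mul_le_one₀ hu (sq_nonneg _) (pow_le_one₀ (norm_nonneg _) (hx i))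
  have mean_feature_le_one :
      1 / Fintype.card ι * ∑ i, ∑ k, ‖reluFeature u w (x i) k‖ ^ 2 ≤ 1 := by
    rw [mul_sum]
    exact sum_le_one_of_le_one_div_card fun i ↦
      mul_le_of_le_one_right (by positivity) (feature_le_one i)
  exact (sum_norm_riskSubgradient_sq_le_mul_mean_reluFeature u w x y).trans <|
    mul_le_of_le_one_right (mul_nonneg zero_le_four (empiricalRisk_nonneg u w x y))
      mean_feature_le_one

end ReLU

/-- for a sample `(x_i, y_i)_{i=1}^n` of unit inputs, the empirical risk
`L̂(θ) = (1/n)·Σ_i (f_θ(x_i) − y_i)²` and its subgradient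
`g(θ) = (2/n)·Σ_i (f_θ(x_i) − y_i)·φ_θ(x_i)` (written blockwise) satisfy
`‖g(θ)‖² ≤ 4·L̂(θ)` whenever every output weight satisfies `u_k² = 1/m`. -/
theorem empirical_risk_subgradient_norm_sq_le
    (d m n : ℕ) (w : Fin m → EuclideanSpace ℝ (Fin d)) (u : Fin m → ℝ)
    (hu : ∀ k, (u k) ^ 2 = 1 / (m : ℝ))
    (x : Fin n → EuclideanSpace ℝ (Fin d)) (hx : ∀ i, ‖x i‖ = 1) (y : Fin n → ℝ)
    (pred : Fin n → ℝ)
    (hpred : ∀ i, pred i = ∑ k, u k * max (⟪w k, x i⟫ : ℝ) 0)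
    (g : Fin m → EuclideanSpace ℝ (Fin d))
    (hg : ∀ k, g k = ((2 : ℝ) / n) •
      ∑ i, ((pred i - y i) * (u k * (if (0:ℝ) < ⟪w k, x i⟫ then (1:ℝ) else 0))) • x i) :
    ∑ k, ‖g k‖ ^ 2 ≤ 4 * ((1 / (n : ℝ)) * ∑ i, (pred i - y i) ^ 2) := by
  have hu_sum : ∑ k, u k ^ 2 ≤ 1 :=
    sum_le_one_of_le_one_div_card fun k ↦ by rw [hu k, Fintype.card_fin]
  simpa only [riskSubgradient, empiricalRisk, reluFeature, reluNetwork, smul_smul,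
    Fintype.card_fin, ← hpred, ← hg] using
    empirical_risk_subgradient_norm_sq_le_general w hu_sum (fun i ↦ (hx i).le) y
end

section
/- Let θ = (w_1,…,w_m) and θ̃ = (w̃_1,…,w̃_m) be parameter vectors in (ℝ^d)^m, let the output weights satisfy |u_k| = 1/√m for every k, let x ∈ ℝ^d with ‖x‖₂ = 1, and assume max_{k∈[m]} ‖w̃_k − w_k‖₂ ≤ ρ for some ρ ≥ 0. Then (φ_{θ̃}(x) − φ_θ(x))ᵀ θ̃ ≤ (ρ/√m)·|P(θ̃, θ, x)|. -/
open Finset RealInnerProductSpace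

/-!
Only the neurons whose activation at `x` changes contribute to the inner product. For such a neuron
the pre-activations `⟪v k, x⟫` and `⟪w k, x⟫` lie on opposite sides of `0`, so `|⟪v k, x⟫|` is at
most their distance, which Cauchy–Schwarz bounds by `‖v k - w k‖ * ‖x‖`.
-/

theorem abs_le_abs_sub_of_not_pos_iff_pos {G : Type*} [AddCommGroup G] [LinearOrder G]
    [IsOrderedAddMonoid G] {a b : G} (h : ¬(0 < a ↔ 0 < b)) : |a| ≤ |a - b| := by
  rcases lt_or_ge 0 a with ha | ha
  · have hb : b ≤ 0 := not_lt.mp fun hb => h (iff_of_true ha hb)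
    calc |a| = a := abs_of_pos ha
      _ ≤ a - b := (le_sub_self_iff a).mpr hb
      _ ≤ |a - b| := le_abs_self _
  · have hb : 0 < b := not_le.mp fun hb => h (iff_of_false ha.not_gt hb.not_gt)
    calc |a| = -a := abs_of_nonpos ha
      _ ≤ b - a := neg_le_sub_iff_le_add.mpr (by simpa using hb.le)
      _ ≤ |a - b| := by rw [abs_sub_comm]; exact le_abs_self _

section ShallowReLU

variable {ι E : Type*} [NormedAddCommGroup E] [InnerProductSpace ℝ E]

/-- The activation indicator `𝟙{wᵀx > 0}` of a ReLU neuron with weight vector `w` at the input `x`,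
that is, the subgradient of the ReLU at `wᵀx` that vanishes at the kink. -/
noncomputable def activation (w x : E) : ℝ :=
  if 0 < ⟪w, x⟫ then 1 else 0

/-- The subgradient feature map `φ_θ(x)` of a shallow ReLU network with hidden weights `w` and
output weights `u`, encoded as the family of its blocks, one for each neuron `k : ι`. -/
noncomputable def featureMap (u : ι → ℝ) (w : ι → E) (x : E) (k : ι) : E :=
  (u k * activation (w k) x) • x

/-- The pattern-change set `P(v, w, x)`: the neurons whose activation at `x` differs between the
hidden weights `v` and `w`. -/
noncomputable def patternChange [Fintype ι] (v w : ι → E) (x : E) : Finset ι :=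
  {k | activation (v k) x ≠ activation (w k) x}

theorem activation_eq_activation_iff {v w x : E} :
    activation v x = activation w x ↔ (0 < ⟪v, x⟫ ↔ 0 < ⟪w, x⟫) := by
  unfold activation
  split_ifs with hv hw hw <;> simp [hv, hw]

theorem abs_activation_sub_activation_le_one (v w x : E) :
    |activation v x - activation w x| ≤ 1 := by
  unfold activation
  split_ifs <;> norm_num

theorem abs_inner_le_of_activation_ne {v w x : E} (h : activation v x ≠ activation w x) :
    |⟪v, x⟫| ≤ ‖v - w‖ * ‖x‖ :=
  calc |⟪v, x⟫| ≤ |⟪v, x⟫ - ⟪w, x⟫| :=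
        abs_le_abs_sub_of_not_pos_iff_pos (mt activation_eq_activation_iff.mpr h)
    _ = |⟪v - w, x⟫| := by rw [inner_sub_left]
    _ ≤ ‖v - w‖ * ‖x‖ := abs_real_inner_le_norm _ _

theorem inner_featureMap_sub_featureMap (u : ι → ℝ) (v w : ι → E) (x y : E) (k : ι) :
    ⟪featureMap u v x k - featureMap u w x k, y⟫ =
      u k * (activation (v k) x - activation (w k) x) * ⟪y, x⟫ := by
  rw [featureMap, featureMap, ← sub_smul, ← mul_sub, real_inner_smul_left, real_inner_comm]

theorem abs_inner_featureMap_sub_featureMap_le (u : ι → ℝ) {v w : ι → E} {x : E} {k : ι}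
    (h : activation (v k) x ≠ activation (w k) x) :
    |⟪featureMap u v x k - featureMap u w x k, v k⟫| ≤ |u k| * (‖v k - w k‖ * ‖x‖) :=
  calc |⟪featureMap u v x k - featureMap u w x k, v k⟫|
      = |u k| * |activation (v k) x - activation (w k) x| * |⟪v k, x⟫| := by
        rw [inner_featureMap_sub_featureMap, abs_mul, abs_mul]
    _ ≤ |u k| * 1 * (‖v k - w k‖ * ‖x‖) := by
        gcongr
        · exact abs_activation_sub_activation_le_one _ _ _
        · exact abs_inner_le_of_activation_ne h
    _ = |u k| * (‖v k - w k‖ * ‖x‖) := by rw [mul_one]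

variable [Fintype ι]

theorem mem_patternChange {v w : ι → E} {x : E} {k : ι} :
    k ∈ patternChange v w x ↔ activation (v k) x ≠ activation (w k) x := by
  simp [patternChange]

theorem sum_inner_featureMap_sub_eq_sum_patternChange (u : ι → ℝ) (v w y : ι → E) (x : E) :
    ∑ k, ⟪featureMap u v x k - featureMap u w x k, y k⟫ =
      ∑ k ∈ patternChange v w x, ⟪featureMap u v x k - featureMap u w x k, y k⟫ := by
  refine (sum_subset (subset_univ _) fun k _ hk => ?_).symm
  have hact : activation (v k) x = activation (w k) x := not_not.mp (mt mem_patternChange.mpr hk)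
  rw [inner_featureMap_sub_featureMap, hact, sub_self, mul_zero, zero_mul]

theorem feature_map_diff_inner_param_le_general {u : ι → ℝ} {v w : ι → E} {c ρ : ℝ}
    (hu : ∀ k, |u k| ≤ c) (hvw : ∀ k, ‖v k - w k‖ ≤ ρ) (x : E) :
    |∑ k, ⟪featureMap u v x k - featureMap u w x k, v k⟫| ≤
      c * (ρ * ‖x‖) * #(patternChange v w x) := by
  have hterm : ∀ k ∈ patternChange v w x,
      |⟪featureMap u v x k - featureMap u w x k, v k⟫| ≤ c * (ρ * ‖x‖) := fun k hk =>
    calc _ ≤ |u k| * (‖v k - w k‖ * ‖x‖) :=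
          abs_inner_featureMap_sub_featureMap_le u (mem_patternChange.mp hk)
      _ ≤ c * (ρ * ‖x‖) := by
          have hc : 0 ≤ c := (abs_nonneg _).trans (hu k)
          gcongr
          exacts [hu k, hvw k]
  calc _ = |∑ k ∈ patternChange v w x, ⟪featureMap u v x k - featureMap u w x k, v k⟫| := by
        rw [sum_inner_featureMap_sub_eq_sum_patternChange]
    _ ≤ ∑ k ∈ patternChange v w x, |⟪featureMap u v x k - featureMap u w x k, v k⟫| :=
        abs_sum_le_sum_abs _ _
    _ ≤ #(patternChange v w x) • (c * (ρ * ‖x‖)) := sum_le_card_nsmul _ _ _ hterm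
    _ = c * (ρ * ‖x‖) * #(patternChange v w x) := by rw [nsmul_eq_mul, mul_comm]

end ShallowReLU

/-- for parameter vectors `θ, θ̃` with `|u_k| = 1/√m`, a unit vector `x`, and
`max_k ‖w̃_k − w_k‖₂ ≤ ρ`, the inner product of the feature-map difference with `θ̃`
(written blockwise) satisfies `(φ_{θ̃}(x) − φ_θ(x))ᵀ θ̃ ≤ (ρ/√m)·|P(θ̃, θ, x)|`. -/
theorem feature_map_diff_inner_param_le
    (d m : ℕ) (w wt : Fin m → EuclideanSpace ℝ (Fin d)) (u : Fin m → ℝ)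
    (hu : ∀ k, |u k| = 1 / Real.sqrt m)
    (x : EuclideanSpace ℝ (Fin d)) (hx : ‖x‖ = 1)
    (ρ : ℝ) (hρ : 0 ≤ ρ) (hw : ∀ k, ‖wt k - w k‖ ≤ ρ) :
    ∑ k, (⟪(u k * (if (0:ℝ) < ⟪wt k, x⟫ then (1:ℝ) else 0)) • x
            - (u k * (if (0:ℝ) < ⟪w k, x⟫ then (1:ℝ) else 0)) • x, wt k⟫ : ℝ)
      ≤ (ρ / Real.sqrt m) *
          ((Finset.univ.filter fun k : Fin m =>
            (if (0:ℝ) < ⟪wt k, x⟫ then (1:ℝ) else 0)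
              ≠ (if (0:ℝ) < ⟪w k, x⟫ then (1:ℝ) else 0)).card : ℝ) := by
  calc _ ≤ 1 / √m * (ρ * ‖x‖) * #(patternChange wt w x) :=
        (le_abs_self _).trans (feature_map_diff_inner_param_le_general (fun k => (hu k).le) hw x)
    _ = ρ / √m * #(patternChange wt w x) := by rw [hx]; ring
end

section
/- Let K be an n×n real symmetric positive semidefinite matrix, let η ∈ (0, 1/2], and assume (2η/n)·K ⪯ I. Given target vectors y, ỹ ∈ ℝⁿ, define the two gradient-descent prediction sequences f_0 = 0, f_{s+1} = f_s − (2η/n)·K·(f_s − y) and f̃_0 = 0, f̃_{s+1} = f̃_s − (2η/n)·K·(f̃_s − ỹ). If |y_i − ỹ_i| ≤ A for every i ∈ [n] and some A ≥ 0, then for every t ∈ ℕ the empirical squared norm of the difference satisfies (1/n)·Σ_{i=1}^n (f_{t,i} − f̃_{t,i})² ≤ A². -/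
open Finset

/-!
Write `M = (2η/n) K` and `P = 1 - M`. The residual `y - f s` is multiplied by `P` at each step, so
`f t = (1 - P ^ t) y` depends linearly on the targets and the two predictions differ by
`(1 - P ^ t) (y - ỹ)`. From `0 ⪯ P ⪯ 1` follows `0 ⪯ 1 - P ^ t ⪯ 1`, and such a matrix does not
increase the Euclidean norm.
-/

section StarOrderedRing

variable {R : Type*} [Ring R] [PartialOrder R] [StarRing R] [StarOrderedRing R] {a : R}

theorem mul_self_le_self_of_mem_Icc_zero_one (ha : a ∈ Set.Icc 0 1) : a * a ≤ a := by
  have hb : 0 ≤ 1 - a := sub_nonneg.2 ha.2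
  -- Multiplying `a * (1 - a)` by `1 = a + (1 - a)` turns it into a sum of two conjugates.
  have hsplit : a - a * a = a * (1 - a) * a + (1 - a) * a * (1 - a) := by noncomm_ring
  rw [← sub_nonneg, hsplit]
  exact add_nonneg (conjugate_nonneg_of_nonneg hb ha.1) (conjugate_nonneg_of_nonneg ha.1 hb)

theorem mul_self_le_one_of_mem_Icc_zero_one (ha : a ∈ Set.Icc 0 1) : a * a ≤ 1 :=
  (mul_self_le_self_of_mem_Icc_zero_one ha).trans ha.2

theorem pow_mem_Icc_zero_one_of_mem (ha : a ∈ Set.Icc 0 1) (k : ℕ) : a ^ k ∈ Set.Icc 0 1 := by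
  induction k using Nat.twoStepInduction with
  | zero => simpa only [pow_zero] using ⟨ha.1.trans ha.2, le_rfl⟩
  | one => simpa only [pow_one] using ha
  | more k ih _ =>
    have hconj : a ^ (k + 2) = a * a ^ k * a := by rw [← pow_succ', ← pow_succ]
    rw [hconj]
    refine ⟨conjugate_nonneg_of_nonneg ih.1 ha.1, ?_⟩
    calc
      a * a ^ k * a ≤ a * 1 * a := conjugate_le_conjugate_of_nonneg ih.2 ha.1
      _ = a * a := by rw [mul_one]
      _ ≤ 1 := mul_self_le_one_of_mem_Icc_zero_one ha

end StarOrderedRing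

section MeanSquare

variable {ι : Type*} [Fintype ι]

theorem one_div_card_mul_sum_norm_sq_le_sq {E : Type*} [SeminormedAddGroup E] {v : ι → E} {A : ℝ}
    (hv : ∀ i, ‖v i‖ ≤ A) : 1 / (Fintype.card ι : ℝ) * ∑ i, ‖v i‖ ^ 2 ≤ A ^ 2 := by
  have hsum : ∑ i, ‖v i‖ ^ 2 ≤ A ^ 2 * Fintype.card ι := by
    rw [mul_comm, ← nsmul_eq_mul]
    exact sum_le_card_nsmul univ _ _ fun i _ ↦ pow_le_pow_left₀ (norm_nonneg _) (hv i) 2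
  rw [one_div_mul_eq_div]
  exact div_le_of_le_mul₀ (Nat.cast_nonneg _) (sq_nonneg A) hsum

theorem star_dotProduct_self_eq_sum_norm_sq {𝕜 : Type*} [RCLike 𝕜] (v : ι → 𝕜) :
    star v ⬝ᵥ v = ((∑ i, ‖v i‖ ^ 2 : ℝ) : 𝕜) := by
  simp only [dotProduct, Pi.star_apply, RCLike.star_def, RCLike.conj_mul, RCLike.ofReal_sum,
    RCLike.ofReal_pow]

end MeanSquare

section GradientDescent

open Matrix
open scoped MatrixOrder ComplexOrder

variable {ι : Type*} [Fintype ι]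

/-- `f` is the sequence of prediction vectors of gradient descent, started at `0`, for kernel least
squares with targets `y`. The matrix `M` is the kernel matrix with the step size absorbed into it,
that is `(2η/n) K` in the usual normalization. -/
structure IsKernelGD {α : Type*} [Ring α] (M : Matrix ι ι α) (y : ι → α) (f : ℕ → ι → α) :
    Prop where
  zero : f 0 = 0
  succ : ∀ s, f (s + 1) = f s - M *ᵥ (f s - y)

variable [DecidableEq ι]

theorem IsKernelGD.sub_eq_pow_mulVec {α : Type*} [Ring α] {M : Matrix ι ι α} {y : ι → α}
    {f : ℕ → ι → α} (hf : IsKernelGD M y f) (t : ℕ) : y - f t = (1 - M) ^ t *ᵥ y := by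
  induction t with
  | zero => rw [hf.zero, sub_zero, pow_zero, one_mulVec]
  | succ s ih =>
    calc
      y - f (s + 1) = (1 - M) *ᵥ (y - f s) := by
        rw [hf.succ, sub_mulVec, one_mulVec, ← neg_sub y (f s), mulVec_neg]
        abel
      _ = (1 - M) ^ (s + 1) *ᵥ y := by rw [ih, mulVec_mulVec, ← pow_succ']

theorem IsKernelGD.eq_one_sub_pow_mulVec {α : Type*} [Ring α] {M : Matrix ι ι α} {y : ι → α}
    {f : ℕ → ι → α} (hf : IsKernelGD M y f) (t : ℕ) : f t = (1 - (1 - M) ^ t) *ᵥ y := by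
  rw [sub_mulVec, one_mulVec, ← hf.sub_eq_pow_mulVec, sub_sub_cancel]

variable {𝕜 : Type*} [RCLike 𝕜]

theorem sum_norm_sq_mulVec_le_of_mem_Icc_zero_one {Q : Matrix ι ι 𝕜} (hQ : Q ∈ Set.Icc 0 1)
    (v : ι → 𝕜) : ∑ i, ‖(Q *ᵥ v) i‖ ^ 2 ≤ ∑ i, ‖v i‖ ^ 2 := by
  have hQQ : (1 - Qᴴ * Q).PosSemidef := by
    rw [hQ.1.posSemidef.isHermitian.eq]
    exact mul_self_le_one_of_mem_Icc_zero_one hQ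
  have hform : star v ⬝ᵥ (Qᴴ * Q) *ᵥ v = star (Q *ᵥ v) ⬝ᵥ (Q *ᵥ v) := by
    rw [star_mulVec, ← mulVec_mulVec, dotProduct_mulVec]
  have hquad : star (Q *ᵥ v) ⬝ᵥ (Q *ᵥ v) ≤ star v ⬝ᵥ v := by
    simpa only [sub_mulVec, one_mulVec, dotProduct_sub, hform, sub_nonneg] using
      hQQ.dotProduct_mulVec_nonneg v
  simpa only [star_dotProduct_self_eq_sum_norm_sq, RCLike.ofReal_le_ofReal] using hquad

variable {M : Matrix ι ι 𝕜} {y yt : ι → 𝕜} {f ft : ℕ → ι → 𝕜}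

theorem IsKernelGD.sum_norm_sq_sub_le (hf : IsKernelGD M y f) (hft : IsKernelGD M yt ft)
    (hM : M ∈ Set.Icc 0 1) (t : ℕ) :
    ∑ i, ‖f t i - ft t i‖ ^ 2 ≤ ∑ i, ‖y i - yt i‖ ^ 2 := by
  have hQ : 1 - (1 - M) ^ t ∈ Set.Icc 0 1 :=
    Set.sub_mem_Icc_zero_iff_right.2
      (pow_mem_Icc_zero_one_of_mem (Set.sub_mem_Icc_zero_iff_right.2 hM) t)
  have hdiff : f t - ft t = (1 - (1 - M) ^ t) *ᵥ (y - yt) := by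
    rw [hf.eq_one_sub_pow_mulVec, hft.eq_one_sub_pow_mulVec, mulVec_sub]
  simpa only [← hdiff, Pi.sub_apply] using
    sum_norm_sq_mulVec_le_of_mem_Icc_zero_one hQ (y - yt)

theorem gd_kls_target_perturbation_general (hM : M.PosSemidef) (hM₁ : (1 - M).PosSemidef)
    (hf : IsKernelGD M y f) (hft : IsKernelGD M yt ft) {A : ℝ} (hy : ∀ i, ‖y i - yt i‖ ≤ A)
    (t : ℕ) : 1 / (Fintype.card ι : ℝ) * ∑ i, ‖f t i - ft t i‖ ^ 2 ≤ A ^ 2 :=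
  calc
    _ ≤ 1 / (Fintype.card ι : ℝ) * ∑ i, ‖y i - yt i‖ ^ 2 := by
      gcongr 1 / (Fintype.card ι : ℝ) * ?_
      exact hf.sum_norm_sq_sub_le hft ⟨hM.nonneg, hM₁⟩ t
    _ ≤ A ^ 2 := one_div_card_mul_sum_norm_sq_le_sq hy

end GradientDescent

/-- for a symmetric PSD kernel matrix `K`, step size `η ∈ (0, 1/2]` with
`(2η/n)·K ⪯ I`, and two GD prediction sequences driven by targets `y` and `ỹ` with
`|y_i − ỹ_i| ≤ A` for all `i`, the empirical squared distance satisfies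
`(1/n)·Σ_i (f_{t,i} − f̃_{t,i})² ≤ A²` for every `t`. -/
theorem gd_kls_target_perturbation
    (n : ℕ) (K : Matrix (Fin n) (Fin n) ℝ) (hK : K.PosSemidef)
    (η : ℝ) (hη : 0 < η) (hη2 : η ≤ 1 / 2)
    (hstep : ((1 : Matrix (Fin n) (Fin n) ℝ) - (2 * η / n) • K).PosSemidef)
    (y yt : Fin n → ℝ) (A : ℝ) (hA : 0 ≤ A) (hy : ∀ i, |y i - yt i| ≤ A)
    (f ft : ℕ → Fin n → ℝ) (hf0 : f 0 = 0) (hft0 : ft 0 = 0)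
    (hf : ∀ s, f (s + 1) = f s - ((2 * η / n) • K).mulVec (f s - y))
    (hft : ∀ s, ft (s + 1) = ft s - ((2 * η / n) • K).mulVec (ft s - yt))
    (t : ℕ) :
    (1 / (n : ℝ)) * ∑ i, (f t i - ft t i) ^ 2 ≤ A ^ 2 := by
  simpa using gd_kls_target_perturbation_general (hK.smul (by positivity)) hstep
    ⟨hf0, hf⟩ ⟨hft0, hft⟩ hy t
end

section
/- For any unit vectors x, x̃ ∈ ℝ^d, the standard Gaussian measure of the intersection of the two half-spaces is γ_d{w ∈ ℝ^d : wᵀx > 0 and wᵀx̃ > 0} = (π − arccos(xᵀx̃)) / (2π). Consequently the neural tangent kernel of the ReLU activation, κ(x, x̃) = (xᵀx̃)·γ_d{w : wᵀx > 0 and wᵀx̃ > 0}, has the analytic form κ(x, x̃) = (xᵀx̃)·(π − arccos(xᵀx̃)) / (2π). -/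
open MeasureTheory ProbabilityTheory Real Finset

/-!
The joint law of `⟪w, x⟫` and `⟪w, y⟫` under a standard Gaussian `w` depends only on the Gram matrix
of `x` and `y`, so both vectors may be moved to the complex plane, to positive multiples of `1` and
`exp (θ * I)` with `θ` the angle between `x` and `y`. This also covers linearly dependent `x` and
`y`, and in particular dimension one. In the plane the Gaussian density is radial, so
integration in polar coordinates shows that the argument of a Gaussian point is uniform on
`(-π, π)`. Both inner products are positive exactly when the argument lies in `(θ - π / 2, π / 2)`,
an arc of length `π - θ`.
-/

open InnerProductGeometry (angle)

open scoped RealInnerProductSpace ENNReal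

section StdGaussian

variable {E F ι : Type*}
  [NormedAddCommGroup E] [InnerProductSpace ℝ E] [FiniteDimensional ℝ E]
  [MeasurableSpace E] [BorelSpace E]
  [NormedAddCommGroup F] [InnerProductSpace ℝ F] [FiniteDimensional ℝ F]
  [MeasurableSpace F] [BorelSpace F]

lemma charFun_map_toLp_inner_stdGaussian [Fintype ι] (v : ι → E) (t : EuclideanSpace ℝ ι) :
    charFun ((stdGaussian E).map fun w ↦ WithLp.toLp 2 fun i ↦ ⟪w, v i⟫) t =
      Complex.exp (-(star t.ofLp ⬝ᵥ (Matrix.gram ℝ v).mulVec t.ofLp : ℝ) / 2) := by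
  have inner_eq (w : E) : ⟪WithLp.toLp 2 fun i ↦ ⟪w, v i⟫, t⟫ = ⟪w, ∑ i, t i • v i⟫ := by
    simp [PiLp.inner_apply, inner_sum, real_inner_smul_right]
  rw [charFun_apply, integral_map (by fun_prop) (by fun_prop)]
  simp_rw [inner_eq]
  rw [← charFun_apply, charFun_stdGaussian, Matrix.star_dotProduct_gram_mulVec,
    real_inner_self_eq_norm_sq, Complex.ofReal_pow]

lemma map_inner_stdGaussian_eq_of_gram_eq [Finite ι] {v : ι → E} {v' : ι → F}
    (h : Matrix.gram ℝ v = Matrix.gram ℝ v') :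
    (stdGaussian E).map (fun w i ↦ ⟪w, v i⟫) = (stdGaussian F).map (fun w i ↦ ⟪w, v' i⟫) := by
  have := Fintype.ofFinite ι
  refine (MeasurableEquiv.toLp 2 (ι → ℝ)).map_measurableEquiv_injective ?_
  rw [Measure.map_map (by fun_prop) (by fun_prop), Measure.map_map (by fun_prop) (by fun_prop)]
  refine Measure.ext_of_charFun (funext fun t ↦ ?_)
  exact (charFun_map_toLp_inner_stdGaussian v t).trans
    (h ▸ (charFun_map_toLp_inner_stdGaussian v' t).symm)

/-- The density with respect to Lebesgue measure of the standard Gaussian on an `n`-dimensional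
Euclidean space, as a function of the distance `r` to the origin. -/
noncomputable def stdGaussianRadialPDF (n : ℕ) (r : ℝ) : ℝ :=
  (2 * π) ^ (-(n : ℝ) / 2) * rexp (-r ^ 2 / 2)

lemma stdGaussianRadialPDF_nonneg (n : ℕ) (r : ℝ) : 0 ≤ stdGaussianRadialPDF n r := by
  unfold stdGaussianRadialPDF
  positivity

lemma measurable_stdGaussianRadialPDF (n : ℕ) : Measurable (stdGaussianRadialPDF n) := by
  unfold stdGaussianRadialPDF
  fun_prop

lemma integral_stdGaussianRadialPDF_mul_cexp_inner (t : E) :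
    ∫ v : E, stdGaussianRadialPDF (Module.finrank ℝ E) ‖v‖ * Complex.exp (⟪v, t⟫ * Complex.I) =
      Complex.exp (-‖t‖ ^ 2 / 2) := by
  have integrand_eq (v : E) :
      stdGaussianRadialPDF (Module.finrank ℝ E) ‖v‖ * Complex.exp (⟪v, t⟫ * Complex.I) =
      ((2 * π : ℝ) ^ (-(Module.finrank ℝ E : ℝ) / 2) : ℝ) *
        Complex.exp (-(1 / 2) * ‖v‖ ^ 2 + Complex.I * ⟪t, v⟫) := by
    rw [stdGaussianRadialPDF, Complex.ofReal_mul, Complex.ofReal_exp, mul_assoc, ← Complex.exp_add,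
      real_inner_comm]
    push_cast
    ring_nf
  have normalization : ((2 * π : ℝ) ^ (-(Module.finrank ℝ E : ℝ) / 2) : ℝ) *
      (π / (1 / 2) : ℂ) ^ (Module.finrank ℝ E / 2 : ℂ) = 1 := by
    rw [show (π / (1 / 2) : ℂ) = ((2 * π : ℝ) : ℂ) by push_cast; ring,
      show (Module.finrank ℝ E / 2 : ℂ) = ((Module.finrank ℝ E / 2 : ℝ) : ℂ) by push_cast; rfl,
      ← Complex.ofReal_cpow two_pi_pos.le, ← Complex.ofReal_mul, ← rpow_add two_pi_pos]
    simp [neg_div]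
  simp_rw [integrand_eq]
  rw [integral_const_mul, GaussianFourier.integral_cexp_neg_mul_sq_norm_add (by norm_num),
    ← mul_assoc, normalization, one_mul, Complex.I_sq]
  ring_nf

lemma integrable_stdGaussianRadialPDF_norm :
    Integrable fun v : E ↦ stdGaussianRadialPDF (Module.finrank ℝ E) ‖v‖ := by
  have integral_eq_one : ∫ v : E, (stdGaussianRadialPDF (Module.finrank ℝ E) ‖v‖ : ℂ) = 1 := by
    simpa using integral_stdGaussianRadialPDF_mul_cexp_inner (0 : E)
  refine .of_integral_ne_zero ?_
  rw [← Complex.ofReal_ne_zero, ← integral_complex_ofReal, integral_eq_one]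
  exact one_ne_zero

lemma stdGaussian_eq_withDensity :
    stdGaussian E = volume.withDensity fun v ↦
      ENNReal.ofReal (stdGaussianRadialPDF (Module.finrank ℝ E) ‖v‖) := by
  have := isFiniteMeasure_withDensity_ofReal (integrable_stdGaussianRadialPDF_norm (E := E)).2
  have measurable_density : Measurable fun v : E ↦
      ENNReal.ofReal (stdGaussianRadialPDF (Module.finrank ℝ E) ‖v‖) :=
    ((measurable_stdGaussianRadialPDF _).comp measurable_norm).ennreal_ofReal
  refine Measure.ext_of_charFun (funext fun t ↦ ?_)
  rw [charFun_stdGaussian, ← integral_stdGaussianRadialPDF_mul_cexp_inner, charFun_apply,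
    integral_withDensity_eq_integral_toReal_smul measurable_density
      (.of_forall fun _ ↦ ENNReal.ofReal_lt_top)]
  simp_rw [ENNReal.toReal_ofReal (stdGaussianRadialPDF_nonneg _ _), Complex.real_smul]

end StdGaussian

section ComplexPlane

lemma withDensity_comp_norm_preimage_arg {ρ : ℝ → ℝ≥0∞} (hρ : Measurable ρ)
    {A : Set ℝ} (hA : MeasurableSet A) :
    (volume.withDensity fun z : ℂ ↦ ρ ‖z‖) (Complex.arg ⁻¹' A) =
      (∫⁻ r in Set.Ioi 0, ENNReal.ofReal r * ρ r) * volume.restrict (Set.Ioo (-π) π) A := by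
  have hargA := Complex.measurable_arg hA
  have integrand_eq : Set.EqOn
      (fun p : ℝ × ℝ ↦ ENNReal.ofReal p.1 •
        (Complex.arg ⁻¹' A).indicator (fun z ↦ ρ ‖z‖) (Complex.polarCoord.symm p))
      (fun p ↦ ENNReal.ofReal p.1 * ρ p.1 * A.indicator 1 p.2) polarCoord.target := by
    rintro ⟨r, θ⟩ ⟨hr : 0 < r, hθ⟩
    have arg_eq : (Complex.polarCoord.symm (r, θ)).arg = θ := by
      simpa using Complex.arg_mul_cos_add_sin_mul_I hr (Set.Ioo_subset_Ioc_self hθ)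
    have norm_eq : ‖Complex.polarCoord.symm (r, θ)‖ = r := by
      rw [Complex.norm_polarCoord_symm, abs_of_pos hr]
    by_cases hmem : θ ∈ A <;>
      simp [Set.indicator, -Complex.polarCoord_symm_apply, hmem, arg_eq, norm_eq]
  rw [withDensity_apply _ hargA, ← lintegral_indicator hargA,
    ← Complex.lintegral_comp_polarCoord_symm,
    setLIntegral_congr_fun polarCoord.open_target.measurableSet integrand_eq, polarCoord_target,
    Measure.volume_eq_prod, ← Measure.prod_restrict,
    lintegral_prod_mul (f := fun r ↦ ENNReal.ofReal r * ρ r) (by fun_prop)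
      (measurable_one.indicator hA).aemeasurable,
    lintegral_indicator_one hA]

lemma isUniform_arg_withDensity_comp_norm {ρ : ℝ → ℝ≥0∞} (hρ : Measurable ρ)
    [IsProbabilityMeasure (volume.withDensity fun z : ℂ ↦ ρ ‖z‖)] :
    pdf.IsUniform Complex.arg (Set.Ioo (-π) π) (volume.withDensity fun z : ℂ ↦ ρ ‖z‖) := by
  have total_mass := withDensity_comp_norm_preimage_arg hρ .univ
  rw [Set.preimage_univ, measure_univ, Measure.restrict_apply_univ] at total_mass
  refine Measure.ext fun A hA ↦ ?_
  rw [Measure.map_apply Complex.measurable_arg hA, withDensity_comp_norm_preimage_arg hρ hA,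
    ENNReal.eq_inv_of_mul_eq_one_left total_mass.symm, ProbabilityTheory.cond, Measure.smul_apply,
    smul_eq_mul]

lemma isUniform_arg_stdGaussian : pdf.IsUniform Complex.arg (Set.Ioo (-π) π) (stdGaussian ℂ) := by
  let ρ (r : ℝ) : ℝ≥0∞ := ENNReal.ofReal (stdGaussianRadialPDF (Module.finrank ℝ ℂ) r)
  have hρ : Measurable ρ := (measurable_stdGaussianRadialPDF _).ennreal_ofReal
  have density_eq : stdGaussian ℂ = volume.withDensity fun z ↦ ρ ‖z‖ := stdGaussian_eq_withDensity
  have : IsProbabilityMeasure (volume.withDensity fun z : ℂ ↦ ρ ‖z‖) :=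
    density_eq ▸ isProbabilityMeasure_stdGaussian
  rw [density_eq]
  exact isUniform_arg_withDensity_comp_norm hρ

lemma inner_exp_mul_I_eq_norm_mul_cos (z : ℂ) (θ : ℝ) :
    ⟪z, Complex.exp (θ * Complex.I)⟫ = ‖z‖ * cos (z.arg - θ) := by
  rw [cos_sub, mul_add, ← mul_assoc, ← mul_assoc, Complex.norm_mul_cos_arg,
    Complex.norm_mul_sin_arg, Complex.inner, Complex.mul_re, Complex.exp_ofReal_mul_I_re,
    Complex.exp_ofReal_mul_I_im, Complex.conj_re, Complex.conj_im]
  ring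

lemma inner_one_eq_norm_mul_cos (z : ℂ) : ⟪z, (1 : ℂ)⟫ = ‖z‖ * cos z.arg := by
  simp

lemma cos_pos_iff_abs_lt_pi_div_two {t : ℝ} (ht : |t| ≤ π + π / 2) :
    0 < cos t ↔ |t| < π / 2 := by
  rw [← cos_abs]
  refine ⟨fun hcos ↦ ?_, fun hlt ↦ cos_pos_of_mem_Ioo ⟨by linarith [abs_nonneg t], hlt⟩⟩
  contrapose! hcos
  exact cos_nonpos_of_pi_div_two_le_of_le hcos ht

lemma cos_pos_and_cos_sub_pos_iff_mem_Ioo {t θ : ℝ} (ht : |t| ≤ π) (hθ : θ ∈ Set.Icc 0 π) :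
    0 < cos t ∧ 0 < cos (t - θ) ↔ t ∈ Set.Ioo (θ - π / 2) (π / 2) := by
  obtain ⟨hθ_nonneg, hθ_le⟩ := hθ
  rw [cos_pos_iff_abs_lt_pi_div_two (by linarith [pi_pos]), abs_lt]
  constructor
  · rintro ⟨⟨hlo, hhi⟩, hcos⟩
    rw [cos_pos_iff_abs_lt_pi_div_two (abs_le.2 ⟨by linarith, by linarith⟩), abs_lt] at hcos
    exact ⟨by linarith, hhi⟩
  · rintro ⟨hlo, hhi⟩
    exact ⟨⟨by linarith, hhi⟩, cos_pos_of_mem_Ioo ⟨by linarith, by linarith⟩⟩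

lemma inner_one_pos_and_inner_exp_pos_iff_arg_mem_Ioo {z : ℂ} (hz : z ≠ 0) {θ : ℝ}
    (hθ : θ ∈ Set.Icc 0 π) :
    0 < ⟪z, (1 : ℂ)⟫ ∧ 0 < ⟪z, Complex.exp (θ * Complex.I)⟫ ↔
      z.arg ∈ Set.Ioo (θ - π / 2) (π / 2) := by
  have hnorm := norm_pos_iff.2 hz
  rw [inner_one_eq_norm_mul_cos, inner_exp_mul_I_eq_norm_mul_cos, mul_pos_iff_of_pos_left hnorm,
    mul_pos_iff_of_pos_left hnorm, cos_pos_and_cos_sub_pos_iff_mem_Ioo (Complex.abs_arg_le_pi z) hθ]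

lemma stdGaussian_halfPlane_one_inter_halfPlane_exp {θ : ℝ} (hθ : θ ∈ Set.Icc 0 π) :
    stdGaussian ℂ {z | 0 < ⟪z, (1 : ℂ)⟫ ∧ 0 < ⟪z, Complex.exp (θ * Complex.I)⟫} =
      ENNReal.ofReal ((π - θ) / (2 * π)) := by
  have ae_ne_zero : ∀ᵐ z ∂stdGaussian ℂ, z ≠ 0 := by
    rw [stdGaussian_eq_withDensity]
    exact (withDensity_absolutelyContinuous _ _).ae_le (Measure.ae_ne volume 0)
  have sector_ae_eq : {z | 0 < ⟪z, (1 : ℂ)⟫ ∧ 0 < ⟪z, Complex.exp (θ * Complex.I)⟫}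
      =ᵐ[stdGaussian ℂ] Complex.arg ⁻¹' Set.Ioo (θ - π / 2) (π / 2) := by
    filter_upwards [ae_ne_zero] with z hz
    exact propext (inner_one_pos_and_inner_exp_pos_iff_arg_mem_Ioo hz hθ)
  have volume_circle : volume (Set.Ioo (-π) π) = ENNReal.ofReal (2 * π) := by
    rw [Real.volume_Ioo, sub_neg_eq_add, two_mul]
  have arc_length : π / 2 - (θ - π / 2) = π - θ := by ring
  have arc_subset : Set.Ioo (θ - π / 2) (π / 2) ⊆ Set.Ioo (-π) π :=
    Set.Ioo_subset_Ioo (by linarith [hθ.1, pi_pos]) (by linarith [pi_pos])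
  rw [measure_congr sector_ae_eq, isUniform_arg_stdGaussian.measure_preimage
    (by simp [volume_circle, pi_pos]) (by simp) measurableSet_Ioo,
    Set.inter_eq_right.2 arc_subset, volume_circle, Real.volume_Ioo, arc_length,
    ← ENNReal.ofReal_div_of_pos two_pi_pos]

lemma gram_pair_eq_gram_complex {E : Type*} [NormedAddCommGroup E] [InnerProductSpace ℝ E]
    (x y : E) :
    Matrix.gram ℝ ![x, y] =
      Matrix.gram ℝ ![‖x‖ • (1 : ℂ), ‖y‖ • Complex.exp (angle x y * Complex.I)] := by
  set u : ℂ := Complex.exp (angle x y * Complex.I)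
  have norm_u : ‖u‖ = 1 := Complex.norm_exp_ofReal_mul_I _
  have inner_eq : ⟪x, y⟫ = ⟪‖x‖ • (1 : ℂ), ‖y‖ • u⟫ := by
    rw [real_inner_smul_left, real_inner_smul_right, inner_exp_mul_I_eq_norm_mul_cos, norm_one,
      one_mul, Complex.arg_one, zero_sub, cos_neg,
      ← InnerProductGeometry.cos_angle_mul_norm_mul_norm]
    ring
  ext i j
  fin_cases i <;> fin_cases j
  · simp [Matrix.gram_apply]
  · exact inner_eq
  · exact (real_inner_comm _ _).trans (inner_eq.trans (real_inner_comm _ _))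
  · simp [Matrix.gram_apply, norm_smul, norm_u, -Complex.inner, -Complex.real_smul]

end ComplexPlane

section HalfSpaces

variable {E : Type*} [NormedAddCommGroup E] [InnerProductSpace ℝ E] [FiniteDimensional ℝ E]
  [MeasurableSpace E] [BorelSpace E]

lemma stdGaussian_halfSpace_inter_halfSpace {x y : E} (hx : x ≠ 0) (hy : y ≠ 0) :
    stdGaussian E {w | 0 < ⟪w, x⟫ ∧ 0 < ⟪w, y⟫} =
      ENNReal.ofReal ((π - angle x y) / (2 * π)) := by
  let quadrant : Set (Fin 2 → ℝ) := {p | 0 < p 0 ∧ 0 < p 1}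
  have hquadrant : MeasurableSet quadrant := by measurability
  let u : ℂ := Complex.exp (angle x y * Complex.I)
  have hθ : angle x y ∈ Set.Icc 0 π :=
    ⟨InnerProductGeometry.angle_nonneg x y, InnerProductGeometry.angle_le_pi x y⟩
  calc stdGaussian E {w | 0 < ⟪w, x⟫ ∧ 0 < ⟪w, y⟫}
      = (stdGaussian E).map (fun w i ↦ ⟪w, ![x, y] i⟫) quadrant := by
        rw [Measure.map_apply (by fun_prop) hquadrant]; rfl
    _ = (stdGaussian ℂ).map (fun z i ↦ ⟪z, ![‖x‖ • (1 : ℂ), ‖y‖ • u] i⟫) quadrant := by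
        rw [map_inner_stdGaussian_eq_of_gram_eq (gram_pair_eq_gram_complex x y)]
    _ = stdGaussian ℂ {z | 0 < ⟪z, ‖x‖ • (1 : ℂ)⟫ ∧ 0 < ⟪z, ‖y‖ • u⟫} := by
        rw [Measure.map_apply (by fun_prop) hquadrant]; rfl
    _ = stdGaussian ℂ {z | 0 < ⟪z, (1 : ℂ)⟫ ∧ 0 < ⟪z, u⟫} := by
        simp_rw [real_inner_smul_right, mul_pos_iff_of_pos_left (norm_pos_iff.2 hx),
          mul_pos_iff_of_pos_left (norm_pos_iff.2 hy)]
    _ = ENNReal.ofReal ((π - angle x y) / (2 * π)) :=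
        stdGaussian_halfPlane_one_inter_halfPlane_exp hθ

theorem relu_ntk_arccos_form_general {x y : E} (hx : x ≠ 0) (hy : y ≠ 0) :
    stdGaussian E {w | 0 < ⟪w, x⟫ ∧ 0 < ⟪w, y⟫} =
      ENNReal.ofReal ((π - angle x y) / (2 * π)) ∧
    ⟪x, y⟫ * (stdGaussian E {w | 0 < ⟪w, x⟫ ∧ 0 < ⟪w, y⟫}).toReal =
      ⟪x, y⟫ * ((π - angle x y) / (2 * π)) := by
  have hangle : 0 ≤ π - angle x y := sub_nonneg.2 (InnerProductGeometry.angle_le_pi x y)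
  have hmeasure := stdGaussian_halfSpace_inter_halfSpace hx hy
  exact ⟨hmeasure, by rw [hmeasure, ENNReal.toReal_ofReal (by positivity)]⟩

end HalfSpaces

section Coordinates

variable {ι : Type*} [Fintype ι]

lemma inner_toLp_toLp_eq_sum_mul (x y : ι → ℝ) :
    ⟪WithLp.toLp 2 x, WithLp.toLp 2 y⟫ = ∑ i, x i * y i := by
  simp [PiLp.inner_apply, mul_comm]

lemma norm_toLp_eq_one_of_sum_sq_eq_one {x : ι → ℝ} (hx : ∑ i, x i ^ 2 = 1) :
    ‖WithLp.toLp 2 x‖ = 1 := by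
  simp [EuclideanSpace.norm_eq, hx]

lemma toLp_ne_zero_of_sum_sq_eq_one {x : ι → ℝ} (hx : ∑ i, x i ^ 2 = 1) : WithLp.toLp 2 x ≠ 0 :=
  norm_ne_zero_iff.1 (norm_toLp_eq_one_of_sum_sq_eq_one hx ▸ one_ne_zero)

lemma angle_toLp_eq_arccos_sum_mul {x y : ι → ℝ} (hx : ∑ i, x i ^ 2 = 1)
    (hy : ∑ i, y i ^ 2 = 1) :
    angle (WithLp.toLp 2 x) (WithLp.toLp 2 y) = arccos (∑ i, x i * y i) := by
  rw [angle, norm_toLp_eq_one_of_sum_sq_eq_one hx, norm_toLp_eq_one_of_sum_sq_eq_one hy,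
    inner_toLp_toLp_eq_sum_mul, mul_one, div_one]

lemma pi_gaussianReal_halfSpace_inter_halfSpace (x y : ι → ℝ) :
    (Measure.pi fun _ : ι ↦ gaussianReal 0 1) {w | 0 < ∑ i, w i * x i ∧ 0 < ∑ i, w i * y i} =
      stdGaussian (EuclideanSpace ℝ ι)
        {w | 0 < ⟪w, WithLp.toLp 2 x⟫ ∧ 0 < ⟪w, WithLp.toLp 2 y⟫} := by
  rw [← map_pi_eq_stdGaussian, Measure.map_apply (by fun_prop) (by measurability)]
  simp_rw [Set.preimage_ofPred_eq, inner_toLp_toLp_eq_sum_mul]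

end Coordinates

/-- for unit vectors `x, x̃ ∈ ℝ^d`, the standard Gaussian measure of the
intersection of the half-spaces `{w : wᵀx > 0}` and `{w : wᵀx̃ > 0}` equals
`(π − arccos(xᵀx̃)) / (2π)`; consequently the ReLU neural tangent kernel
`κ(x, x̃) = (xᵀx̃)·γ_d{w : wᵀx > 0, wᵀx̃ > 0}` has the analytic form
`κ(x, x̃) = (xᵀx̃)·(π − arccos(xᵀx̃)) / (2π)`. -/
theorem relu_ntk_arccos_form
    (d : ℕ) (x xt : Fin d → ℝ)
    (hx : ∑ i, (x i) ^ 2 = 1) (hxt : ∑ i, (xt i) ^ 2 = 1) :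
    ((Measure.pi fun _ : Fin d => gaussianReal 0 1)
        {w : Fin d → ℝ | 0 < ∑ i, w i * x i ∧ 0 < ∑ i, w i * xt i}
      = ENNReal.ofReal ((π - Real.arccos (∑ i, x i * xt i)) / (2 * π))) ∧
    ((∑ i, x i * xt i) *
        ((Measure.pi fun _ : Fin d => gaussianReal 0 1)
          {w : Fin d → ℝ | 0 < ∑ i, w i * x i ∧ 0 < ∑ i, w i * xt i}).toReal
      = (∑ i, x i * xt i) * ((π - Real.arccos (∑ i, x i * xt i)) / (2 * π))) := by
  simpa only [pi_gaussianReal_halfSpace_inter_halfSpace, angle_toLp_eq_arccos_sum_mul hx hxt,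
    inner_toLp_toLp_eq_sum_mul]
    using relu_ntk_arccos_form_general (toLp_ne_zero_of_sum_sq_eq_one hx)
      (toLp_ne_zero_of_sum_sq_eq_one hxt)
end

section
/- Let d > 2 be an integer, let Λ > 0, C > 0, x > 0, y > 0, and define the approximation-error function A(R) = C·Λ·(√R/Λ)^{−2/(d−2)}·ln(√R/Λ) for R > 0. Set R* = Λ²·(y/x)^{2/d − 1} and assume R* ≥ max(C, Λ²). Then x·A(R*)² + y·R* ≤ (1 + C²·(ln₊((y/x)^{1/d − 1/2}))²)·Λ²·x^{1−2/d}·y^{2/d}, where ln₊(z) = max(ln z, 0); in particular the minimum of x·A(R)² + y·R over R ≥ max(C, Λ²) is at most this bound. -/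
/-!
Up to the logarithmic factor, the approximation term `x·A(R)²` is `x·Λ²·ρ^{-4/(d-2)}` with
`ρ = √R/Λ`, while the estimation term is `y·R = y·Λ²·ρ²`. The radius `R*` is the one at which these
two powers of `ρ` balance: there `ρ = (y/x)^{1/d - 1/2}` and both equal `Λ²·x^{1-2/d}·y^{2/d}`.
Hence the total cost at `R*` is exactly `1 + C²·ln² ρ` times this common value, and `R* ≥ Λ²` says
that `ρ ≥ 1`, so that `ln ρ = ln₊ ρ`.
-/

/-- The error `A(R)` of approximating a bounded `Λ`-Lipschitz function in dimension `d` by an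
element of an RKHS ball of squared radius `R`. The dimension is allowed to be any real number; at
`d = 2` the exponent takes the junk value `0`. -/
noncomputable def approxError (d C Λ R : ℝ) : ℝ :=
  C * Λ * (√R / Λ) ^ (-2 / (d - 2)) * Real.log (√R / Λ)

/-- The squared radius `R*` that balances the approximation term, of weight `x` and taken without
its logarithmic factor, against the estimation term, of weight `y`. -/
noncomputable def balancingRadius (d Λ x y : ℝ) : ℝ :=
  Λ ^ 2 * (y / x) ^ (2 / d - 1)

theorem mul_div_rpow_eq {x y : ℝ} (hx : 0 < x) (hy : 0 ≤ y) (s : ℝ) :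
    x * (y / x) ^ s = x ^ (1 - s) * y ^ s := by
  rw [Real.div_rpow hy hx.le, Real.rpow_sub hx, Real.rpow_one]
  ring

section

variable {d Λ x y : ℝ}

theorem sqrt_balancingRadius_div (d : ℝ) (hΛ : 0 < Λ) (hx : 0 ≤ x) (hy : 0 ≤ y) :
    √(balancingRadius d Λ x y) / Λ = (y / x) ^ (1 / d - 1 / 2) := by
  have sqrt_rpow : √((y / x) ^ (2 / d - 1)) = (y / x) ^ (1 / d - 1 / 2) := by
    rw [Real.sqrt_eq_rpow, ← Real.rpow_mul (div_nonneg hy hx)]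
    ring_nf
  rw [balancingRadius, Real.sqrt_mul (sq_nonneg Λ), Real.sqrt_sq hΛ.le, sqrt_rpow,
    mul_div_cancel_left₀ _ hΛ.ne']

theorem one_le_sqrt_div_of_sq_le {R : ℝ} (hΛ : 0 < Λ) (hR : Λ ^ 2 ≤ R) : 1 ≤ √R / Λ :=
  (one_le_div hΛ).2 (Real.le_sqrt_of_sq_le hR)

theorem mul_balancingRadius (d Λ : ℝ) (hx : 0 < x) (hy : 0 < y) :
    y * balancingRadius d Λ x y = Λ ^ 2 * (x ^ (1 - 2 / d) * y ^ (2 / d)) := by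
  rw [balancingRadius, ← mul_div_rpow_eq hx hy.le, Real.rpow_sub_one (div_pos hy hx).ne']
  field_simp

theorem approxError_balancingRadius (C : ℝ) (hd₀ : d ≠ 0) (hd₂ : d ≠ 2) (hΛ : 0 < Λ)
    (hx : 0 ≤ x) (hy : 0 ≤ y) :
    approxError d C Λ (balancingRadius d Λ x y) =
      C * Λ * (y / x) ^ (1 / d) * Real.log ((y / x) ^ (1 / d - 1 / 2)) := by
  have exponent_eq : (1 / d - 1 / 2) * (-2 / (d - 2)) = 1 / d := by
    have : d - 2 ≠ 0 := sub_ne_zero.2 hd₂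
    field_simp
    ring
  rw [approxError, sqrt_balancingRadius_div d hΛ hx hy, ← Real.rpow_mul (div_nonneg hy hx),
    exponent_eq]

theorem mul_approxError_balancingRadius_sq (C : ℝ) (hd₀ : d ≠ 0) (hd₂ : d ≠ 2) (hΛ : 0 < Λ)
    (hx : 0 < x) (hy : 0 ≤ y) :
    x * approxError d C Λ (balancingRadius d Λ x y) ^ 2 =
      C ^ 2 * Real.log ((y / x) ^ (1 / d - 1 / 2)) ^ 2 *
        (Λ ^ 2 * (x ^ (1 - 2 / d) * y ^ (2 / d))) := by
  have rpow_sq : ((y / x) ^ (1 / d)) ^ 2 = (y / x) ^ (2 / d) := by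
    rw [← Real.rpow_mul_natCast (div_nonneg hy hx.le)]
    ring_nf
  rw [approxError_balancingRadius C hd₀ hd₂ hΛ hx.le hy, ← mul_div_rpow_eq hx hy, ← rpow_sq]
  ring

theorem lipschitz_approx_tradeoff_general (C : ℝ) (hd₀ : d ≠ 0) (hd₂ : d ≠ 2) (hΛ : 0 < Λ)
    (hx : 0 < x) (hy : 0 < y) (hR : Λ ^ 2 ≤ balancingRadius d Λ x y) :
    x * approxError d C Λ (balancingRadius d Λ x y) ^ 2 + y * balancingRadius d Λ x y =
      (1 + C ^ 2 * max (Real.log ((y / x) ^ (1 / d - 1 / 2))) 0 ^ 2) *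
        Λ ^ 2 * x ^ (1 - 2 / d) * y ^ (2 / d) := by
  have one_le_ratio : 1 ≤ (y / x) ^ (1 / d - 1 / 2) :=
    sqrt_balancingRadius_div d hΛ hx.le hy.le ▸ one_le_sqrt_div_of_sq_le hΛ hR
  rw [mul_approxError_balancingRadius_sq C hd₀ hd₂ hΛ hx hy.le, mul_balancingRadius d Λ hx hy,
    max_eq_left (Real.log_nonneg one_le_ratio)]
  ring

end

/-- approximation–estimation trade-off. For `d > 2`, `Λ, C, x, y > 0` and
`A(R) = C·Λ·(√R/Λ)^{−2/(d−2)}·ln(√R/Λ)`, setting `R* = Λ²·(y/x)^{2/d − 1}` with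
`R* ≥ max(C, Λ²)`, one has
`x·A(R*)² + y·R* ≤ (1 + C²·ln₊²((y/x)^{1/d − 1/2}))·Λ²·x^{1−2/d}·y^{2/d}`;
in particular the minimum of `x·A(R)² + y·R` over `R ≥ max(C, Λ²)` is at most this bound. -/
theorem lipschitz_approx_tradeoff
    (d : ℕ) (hd : 2 < d) (Λ C x y : ℝ)
    (hΛ : 0 < Λ) (hC : 0 < C) (hx : 0 < x) (hy : 0 < y)
    (A : ℝ → ℝ)
    (hA : ∀ R > 0, A R = C * Λ * (Real.sqrt R / Λ) ^ (-(2 : ℝ) / ((d : ℝ) - 2))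
        * Real.log (Real.sqrt R / Λ))
    (Rstar : ℝ) (hRstar : Rstar = Λ ^ 2 * (y / x) ^ ((2 : ℝ) / d - 1))
    (hRge : max C (Λ ^ 2) ≤ Rstar) :
    (x * A Rstar ^ 2 + y * Rstar
        ≤ (1 + C ^ 2 * (max (Real.log ((y / x) ^ ((1 : ℝ) / d - 1 / 2))) 0) ^ 2)
            * Λ ^ 2 * x ^ (1 - (2 : ℝ) / d) * y ^ ((2 : ℝ) / d)) ∧
    (∃ R, max C (Λ ^ 2) ≤ R ∧
      x * A R ^ 2 + y * R
        ≤ (1 + C ^ 2 * (max (Real.log ((y / x) ^ ((1 : ℝ) / d - 1 / 2))) 0) ^ 2)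
            * Λ ^ 2 * x ^ (1 - (2 : ℝ) / d) * y ^ ((2 : ℝ) / d)) := by
  have two_lt_d : (2 : ℝ) < d := by exact_mod_cast hd
  obtain ⟨hCR, hΛR⟩ := max_le_iff.1 hRge
  have cost_le := (lipschitz_approx_tradeoff_general C (two_pos.trans two_lt_d).ne' two_lt_d.ne'
    hΛ hx hy (hΛR.trans_eq hRstar)).le
  rw [balancingRadius, ← hRstar, approxError, ← hA Rstar (hC.trans_le hCR)] at cost_le
  exact ⟨cost_le, Rstar, hRge, cost_le⟩
end

section
/- Let K and K̂ be n×n real symmetric matrices with K̂ positive semidefinite, let c > 0 satisfy c·λ_max(K̂) ≤ 1, and let λ = λ_min(K̂). Fix y ∈ ℝⁿ and define the sequences u_0 = v_0 = 0, u_{s+1} = u_s − c·K̂·(u_s − y), and v_{s+1} = v_s − c·K·(v_s − y). Then for every t ≥ 1, ‖u_t − v_t‖₂ ≤ c·‖K − K̂‖_op · Σ_{s=0}^{t−1} (1 − c·λ)^{t−1−s}·‖v_s − y‖₂. -/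
open Finset

/-!
The difference of the two trajectories obeys the perturbed linear recursion
`u_{s+1} - v_{s+1} = (1 - c K̂) (u_s - v_s) + c (K - K̂) (v_s - y)`.
In the Loewner order `0 ≤ 1 - c K̂ ≤ 1 - c λ`, so `1 - c K̂` has norm at most `1 - c λ`, and the
bound is the discrete Grönwall inequality for the resulting scalar recursion.
-/

lemma le_pow_mul_add_sum_of_succ_le {R : Type*} [CommSemiring R] [PartialOrder R] [IsOrderedRing R]
    {a b : ℕ → R} {r : R} (hr : 0 ≤ r) (h : ∀ s, a (s + 1) ≤ r * a s + b s) (t : ℕ) :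
    a t ≤ r ^ t * a 0 + ∑ s ∈ range t, r ^ (t - 1 - s) * b s := by
  have gronwall := discrete_gronwall_prod_general (n₀ := 0) (fun s _ ↦ h s) (fun _ _ ↦ hr) t.zero_le
  simpa [Nat.sub_sub, add_comm, mul_comm] using gronwall

section NormedSpace

variable {𝕜 E : Type*} [NontriviallyNormedField 𝕜] [SeminormedAddCommGroup E] [NormedSpace 𝕜 E]
  {A B : E →L[𝕜] E} {c : 𝕜} {y : E} {u v : ℕ → E}

lemma gd_iterate_succ_sub_eq (hu : ∀ s, u (s + 1) = u s - c • A (u s - y))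
    (hv : ∀ s, v (s + 1) = v s - c • B (v s - y)) (s : ℕ) :
    u (s + 1) - v (s + 1) = (1 - c • A) (u s - v s) + c • (B - A) (v s - y) := by
  simp only [hu, hv, sub_apply, one_apply_eq_self, smul_apply, map_sub, smul_sub]
  abel

lemma norm_gd_iterate_sub_le {r : ℝ} (hA : ‖1 - c • A‖ ≤ r)
    (hu : ∀ s, u (s + 1) = u s - c • A (u s - y))
    (hv : ∀ s, v (s + 1) = v s - c • B (v s - y)) (t : ℕ) :
    ‖u t - v t‖ ≤ r ^ t * ‖u 0 - v 0‖ +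
      ‖c‖ * ‖B - A‖ * ∑ s ∈ range t, r ^ (t - 1 - s) * ‖v s - y‖ := by
  have norm_succ_le (s : ℕ) :
      ‖u (s + 1) - v (s + 1)‖ ≤ r * ‖u s - v s‖ + ‖c‖ * ‖B - A‖ * ‖v s - y‖ := by
    rw [gd_iterate_succ_sub_eq hu hv, mul_assoc]
    refine norm_add_le_of_le ((1 - c • A).le_of_opNorm_le hA _) ((norm_smul_le _ _).trans ?_)
    gcongr
    exact (B - A).le_opNorm _
  simpa only [mul_sum, mul_left_comm] using
    le_pow_mul_add_sum_of_succ_le (a := fun s ↦ ‖u s - v s‖) ((norm_nonneg _).trans hA)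
      norm_succ_le t

end NormedSpace

section InnerProductSpace

open scoped ComplexOrder

variable {𝕜 E : Type*} [RCLike 𝕜] [NormedAddCommGroup E] [InnerProductSpace 𝕜 E] [Nontrivial E]

lemma nonneg_of_isPositive_smul_one {α : 𝕜} (h : (α • (1 : E →L[𝕜] E)).IsPositive) : 0 ≤ α :=
  (LinearMap.isPositive_one.isPositive_smul_iff one_ne_zero).1 h.toLinearMap

lemma opNorm_le_of_isPositive_of_le_smul_one {T : E →L[𝕜] E} {r : ℝ} (hT : T.IsPositive)
    (hTr : T ≤ (r : 𝕜) • 1) : ‖T‖ ≤ r := by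
  have hr : 0 ≤ r := RCLike.ofReal_nonneg.1 <| nonneg_of_isPositive_smul_one (E := E) <| by
    simpa using hT.add hTr
  have inner_le (x : E) : RCLike.re (inner 𝕜 (T x) x) ≤ r * ‖x‖ ^ 2 := by
    simpa [inner_sub_left, inner_smul_left] using
      ContinuousLinearMap.IsPositive.re_inner_nonneg_left hTr x
  rw [T.norm_eq_iSup_rayleighQuotient hT.isSymmetric]
  refine ciSup_le fun x ↦ ?_
  have rayleigh_nonneg : 0 ≤ T.rayleighQuotient x :=
    div_nonneg (hT.re_inner_nonneg_left x) (sq_nonneg _)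
  rw [abs_of_nonneg rayleigh_nonneg]
  exact div_le_of_le_mul₀ (sq_nonneg _) hr (inner_le x)

variable {A B : E →L[𝕜] E} {c lam L : ℝ}

lemma opNorm_one_sub_smul_le (hc : 0 ≤ c) (hlam : (lam : 𝕜) • 1 ≤ A) (hL : A ≤ (L : 𝕜) • 1)
    (hcL : c * L ≤ 1) : ‖1 - (c : 𝕜) • A‖ ≤ 1 - c * lam := by
  have hc' : (0 : 𝕜) ≤ c := RCLike.ofReal_nonneg.2 hc
  have hcL' : (0 : 𝕜) ≤ (1 - c * L : ℝ) := RCLike.ofReal_nonneg.2 (sub_nonneg.2 hcL)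
  have one_sub_eq : 1 - (c : 𝕜) • A =
      ((1 - c * L : ℝ) : 𝕜) • 1 + (c : 𝕜) • ((L : 𝕜) • 1 - A) := by
    push_cast
    module
  have gap_eq : ((1 - c * lam : ℝ) : 𝕜) • 1 - (1 - (c : 𝕜) • A) =
      (c : 𝕜) • (A - (lam : 𝕜) • 1) := by
    push_cast
    module
  apply opNorm_le_of_isPositive_of_le_smul_one
  · rw [one_sub_eq]
    exact (ContinuousLinearMap.isPositive_one.smul_of_nonneg hcL').add
      (ContinuousLinearMap.IsPositive.smul_of_nonneg hL hc')
  · rw [ContinuousLinearMap.le_def, gap_eq]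
    exact ContinuousLinearMap.IsPositive.smul_of_nonneg hlam hc'

theorem gd_kernel_matrix_perturbation_general (hc : 0 ≤ c) (hlam : (lam : 𝕜) • 1 ≤ A)
    (hL : A ≤ (L : 𝕜) • 1) (hcL : c * L ≤ 1) {y : E} {u v : ℕ → E}
    (hu : ∀ s, u (s + 1) = u s - (c : 𝕜) • A (u s - y))
    (hv : ∀ s, v (s + 1) = v s - (c : 𝕜) • B (v s - y)) (t : ℕ) :
    ‖u t - v t‖ ≤ (1 - c * lam) ^ t * ‖u 0 - v 0‖ +
      c * ‖B - A‖ * ∑ s ∈ range t, (1 - c * lam) ^ (t - 1 - s) * ‖v s - y‖ := by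
  have contraction := opNorm_one_sub_smul_le hc hlam hL hcL
  simpa only [RCLike.norm_ofReal, abs_of_nonneg hc] using norm_gd_iterate_sub_le contraction hu hv t

end InnerProductSpace

section Matrix

open scoped MatrixOrder

variable {𝕜 ι : Type*} [RCLike 𝕜] [Fintype ι] [DecidableEq ι] {M N : Matrix ι ι 𝕜}

lemma toEuclideanCLM_le_toEuclideanCLM_iff :
    Matrix.toEuclideanCLM (𝕜 := 𝕜) M ≤ Matrix.toEuclideanCLM (𝕜 := 𝕜) N ↔ M ≤ N := by
  rw [ContinuousLinearMap.le_def, ← map_sub, Matrix.le_iff, ← Matrix.isPositive_toEuclideanLin_iff]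
  rfl

lemma toEuclideanCLM_algebraMap (r : ℝ) :
    Matrix.toEuclideanCLM (𝕜 := 𝕜) (algebraMap ℝ (Matrix ι ι 𝕜) r) = (r : 𝕜) • 1 := by
  rw [Algebra.algebraMap_eq_smul_one, RCLike.real_smul_eq_coe_smul (K := 𝕜), map_smul, map_one]

lemma iInf_eigenvalues_smul_one_le_toEuclideanCLM (hM : M.IsHermitian) :
    ((⨅ i, hM.eigenvalues i : ℝ) : 𝕜) • 1 ≤ Matrix.toEuclideanCLM (𝕜 := 𝕜) M := by
  rw [← toEuclideanCLM_algebraMap, toEuclideanCLM_le_toEuclideanCLM_iff]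
  refine algebraMap_le_of_le_spectrum (fun x hx ↦ ?_) hM.isSelfAdjoint
  obtain ⟨i, rfl⟩ := hM.spectrum_real_eq_range_eigenvalues ▸ hx
  exact ciInf_le (Set.finite_range _).bddBelow i

lemma toEuclideanCLM_le_iSup_eigenvalues_smul_one (hM : M.IsHermitian) :
    Matrix.toEuclideanCLM (𝕜 := 𝕜) M ≤ ((⨆ i, hM.eigenvalues i : ℝ) : 𝕜) • 1 := by
  rw [← toEuclideanCLM_algebraMap, toEuclideanCLM_le_toEuclideanCLM_iff]
  refine le_algebraMap_of_spectrum_le (fun x hx ↦ ?_) hM.isSelfAdjoint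
  obtain ⟨i, rfl⟩ := hM.spectrum_real_eq_range_eigenvalues ▸ hx
  exact le_ciSup (Set.finite_range _).bddAbove i

end Matrix

/-- for symmetric `K, K̂` with `K̂` PSD, `c > 0` with `c·λ_max(K̂) ≤ 1`, and
`λ = λ_min(K̂)`, the GD prediction sequences `u_{s+1} = u_s − c·K̂·(u_s − y)` and
`v_{s+1} = v_s − c·K·(v_s − y)` (both started at 0) satisfy, for every `t ≥ 1`,
`‖u_t − v_t‖₂ ≤ c·‖K − K̂‖_op · Σ_{s=0}^{t−1} (1 − c·λ)^{t−1−s}·‖v_s − y‖₂`. -/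
theorem gd_kernel_matrix_perturbation
    (n : ℕ) (hn : 0 < n) (K Khat : Matrix (Fin n) (Fin n) ℝ)
    (hK : K.IsHermitian) (hKhat : Khat.IsHermitian) (hpsd : Khat.PosSemidef)
    (c : ℝ) (hc : 0 < c)
    (hcmax : c * (⨆ i, hKhat.eigenvalues i) ≤ 1)
    (lam : ℝ) (hlam : lam = ⨅ i, hKhat.eigenvalues i)
    (y : Fin n → ℝ) (u v : ℕ → Fin n → ℝ)
    (hu0 : u 0 = 0) (hv0 : v 0 = 0)
    (hu : ∀ s, u (s + 1) = u s - c • Khat.mulVec (u s - y))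
    (hv : ∀ s, v (s + 1) = v s - c • K.mulVec (v s - y))
    (t : ℕ) (ht : 1 ≤ t) :
    Real.sqrt (∑ i, (u t i - v t i) ^ 2)
      ≤ c * ‖Matrix.toEuclideanCLM (𝕜 := ℝ) (K - Khat)‖ *
          ∑ s ∈ Finset.range t,
            (1 - c * lam) ^ (t - 1 - s) * Real.sqrt (∑ i, (v s i - y i) ^ 2) := by
  have : Nonempty (Fin n) := ⟨⟨0, hn⟩⟩
  simpa [EuclideanSpace.norm_eq, hu0, hv0, hlam] using
    gd_kernel_matrix_perturbation_general (B := Matrix.toEuclideanCLM (𝕜 := ℝ) K) hc.le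
      (iInf_eigenvalues_smul_one_le_toEuclideanCLM hKhat)
      (toEuclideanCLM_le_iSup_eigenvalues_smul_one hKhat) hcmax
      (y := WithLp.toLp 2 y) (u := fun s ↦ WithLp.toLp 2 (u s)) (v := fun s ↦ WithLp.toLp 2 (v s))
      (fun s ↦ congrArg (WithLp.toLp 2) (hu s)) (fun s ↦ congrArg (WithLp.toLp 2) (hv s)) t
end
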